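/- arXiv:1802.05811 — 3 statements merged into one kernel-verified Lean document; each statement's English description precedes it below -/
import Mathlib

section
/- Suppose D is a probability distribution over convex L-smooth functions f : ℝ^d → ℝ, let F(w) = E_{f∼D}[f(w)], and let w* ∈ argmin F (over all of ℝ^d, so ∇F(w*) = 0). Then for every x ∈ ℝ^d, E_{f∼D}[‖∇f(x) − ∇f(w*)‖²] ≤ 2L (F(x) − F(w*)). -/
open MeasureTheory

section helpers

variable {d : ℕ}

theorem aux_hasDerivAt (f : EuclideanSpace ℝ (Fin d) → ℝ)
    (g : EuclideanSpace ℝ (Fin d) → EuclideanSpace ℝ (Fin d))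
    (hg : ∀ x, HasGradientAt f (g x) x) (x v : EuclideanSpace ℝ (Fin d)) (t : ℝ) :
    HasDerivAt (fun t : ℝ => f (x + t • v)) (inner ℝ (g (x + t • v)) v) t := by
  have h1 : HasDerivAt (fun t : ℝ => x + t • v) v t := by
    simpa using ((hasDerivAt_id t).smul_const v).const_add x
  have h2 := (hg (x + t • v)).hasFDerivAt.comp_hasDerivAt t h1
  have e : (InnerProductSpace.toDual ℝ (EuclideanSpace ℝ (Fin d)) (g (x + t • v))) v
      = inner ℝ (g (x + t • v)) v := InnerProductSpace.toDual_apply_apply ..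
  rw [← e]
  exact h2

theorem aux_descent (L : ℝ) (f : EuclideanSpace ℝ (Fin d) → ℝ)
    (g : EuclideanSpace ℝ (Fin d) → EuclideanSpace ℝ (Fin d))
    (hg : ∀ x, HasGradientAt f (g x) x)
    (hlip : ∀ u v, ‖g u - g v‖ ≤ L * ‖u - v‖) (x v : EuclideanSpace ℝ (Fin d)) :
    f (x + v) ≤ f x + inner ℝ (g x) v + L / 2 * ‖v‖ ^ 2 := by
  have hd : ∀ t : ℝ, HasDerivAt
      (fun t : ℝ => f (x + t • v) - (t * inner ℝ (g x) v + t ^ 2 * (L / 2 * ‖v‖ ^ 2)))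
      (inner ℝ (g (x + t • v)) v - (inner ℝ (g x) v + 2 * t * (L / 2 * ‖v‖ ^ 2))) t := by
    intro t
    have h1 : HasDerivAt (fun t : ℝ => t * inner ℝ (g x) v) (inner ℝ (g x) v) t := by
      simpa using (hasDerivAt_id t).mul_const (inner ℝ (g x) v)
    have h2 : HasDerivAt (fun t : ℝ => t ^ 2 * (L / 2 * ‖v‖ ^ 2))
        (2 * t * (L / 2 * ‖v‖ ^ 2)) t := by
      simpa using (hasDerivAt_pow 2 t).mul_const (L / 2 * ‖v‖ ^ 2)
    exact (aux_hasDerivAt f g hg x v t).sub (h1.add h2)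
  have hanti := antitoneOn_of_deriv_nonpos (convex_Icc (0 : ℝ) 1)
    (fun t _ => (hd t).continuousAt.continuousWithinAt)
    (fun t _ => (hd t).differentiableAt.differentiableWithinAt)
    (fun t ht => by
      rw [interior_Icc] at ht
      rw [(hd t).deriv]
      have h3 : inner ℝ (g (x + t • v) - g x) v ≤ L * (t * ‖v‖) * ‖v‖ := by
        refine (real_inner_le_norm _ _).trans ?_
        gcongr
        have := hlip (x + t • v) x
        simpa [norm_smul, abs_of_pos ht.1] using this
      rw [inner_sub_left] at h3
      nlinarith)
  have := hanti (Set.left_mem_Icc.2 zero_le_one) (Set.right_mem_Icc.2 zero_le_one) zero_le_one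
  simp at this
  linarith

theorem aux_convex (f : EuclideanSpace ℝ (Fin d) → ℝ)
    (g : EuclideanSpace ℝ (Fin d) → EuclideanSpace ℝ (Fin d))
    (hc : ConvexOn ℝ Set.univ f)
    (hg : ∀ x, HasGradientAt f (g x) x) (x v : EuclideanSpace ℝ (Fin d)) :
    f x + inner ℝ (g x) v ≤ f (x + v) := by
  have hc1 : ConvexOn ℝ Set.univ (fun t : ℝ => f (x + t • v)) := by
    refine ⟨convex_univ, fun a _ b _ p q hp hq hpq => ?_⟩
    have h := hc.2 (Set.mem_univ (x + a • v)) (Set.mem_univ (x + b • v)) hp hq hpq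
    have e : p • (x + a • v) + q • (x + b • v) = x + (p • a + q • b) • v := by
      have : x = (p + q) • x := by rw [hpq, one_smul]
      conv_rhs => rw [this]
      simp only [smul_eq_mul]
      module
    rw [e] at h
    exact h
  have h := hc1.le_slope_of_hasDerivAt (Set.mem_univ 0) (Set.mem_univ 1) zero_lt_one
    (aux_hasDerivAt f g hg x v 0)
  simp [slope_def_field] at h
  linarith

theorem aux_coco (L : ℝ) (hL : 0 < L) (f : EuclideanSpace ℝ (Fin d) → ℝ)
    (g : EuclideanSpace ℝ (Fin d) → EuclideanSpace ℝ (Fin d))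
    (hc : ConvexOn ℝ Set.univ f)
    (hg : ∀ x, HasGradientAt f (g x) x)
    (hlip : ∀ u v, ‖g u - g v‖ ≤ L * ‖u - v‖) (x w : EuclideanSpace ℝ (Fin d)) :
    ‖g x - g w‖ ^ 2 ≤ 2 * L * (f x - f w - inner ℝ (g w) (x - w)) := by
  have h1 := aux_descent L f g hg hlip x (-(L⁻¹ • (g x - g w)))
  have h2 := aux_convex f g hc hg w (x - w + -(L⁻¹ • (g x - g w)))
  have e : w + (x - w + -(L⁻¹ • (g x - g w))) = x + -(L⁻¹ • (g x - g w)) := by abel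
  rw [e, inner_add_right] at h2
  have h3 : inner ℝ (g x) (g x - g w) - inner ℝ (g w) (g x - g w) = ‖g x - g w‖ ^ 2 := by
    rw [← inner_sub_left, real_inner_self_eq_norm_sq]
  rw [inner_neg_right, inner_smul_right] at h1 h2
  rw [norm_neg, norm_smul, Real.norm_of_nonneg (inv_nonneg.2 hL.le)] at h1
  have h4 : L / 2 * (L⁻¹ * ‖g x - g w‖) ^ 2 = L⁻¹ * (‖g x - g w‖ ^ 2 / 2) := by
    field_simp
  rw [h4] at h1
  have h5 : L⁻¹ * (‖g x - g w‖ ^ 2 / 2) ≤ f x - f w - inner ℝ (g w) (x - w) := by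
    have : L⁻¹ * ‖g x - g w‖ ^ 2
      = L⁻¹ * inner ℝ (g x) (g x - g w) - L⁻¹ * inner ℝ (g w) (g x - g w) := by
      rw [← h3]; ring
    linarith
  rw [inv_mul_le_iff₀ hL] at h5
  linarith

end helpers

/-- Suppose `D` (modelled by a probability measure `μ` on an index space `Ω`) is a distribution
over convex `L`-smooth functions `f ω : ℝ^d → ℝ`, let `F w = E_{f∼D}[f(w)]`, and let `w*` be a
global minimizer of `F` (so `∇F(w*) = 0`). Then for every `x`,
`E_{f∼D}[‖∇f(x) − ∇f(w*)‖²] ≤ 2L (F(x) − F(w*))`. -/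
theorem expected_grad_diff_sq_le {d : ℕ} {Ω : Type*} [MeasurableSpace Ω]
    (μ : Measure Ω) [IsProbabilityMeasure μ]
    (L : ℝ) (hL : 0 ≤ L)
    (f : Ω → EuclideanSpace ℝ (Fin d) → ℝ)
    (gradf : Ω → EuclideanSpace ℝ (Fin d) → EuclideanSpace ℝ (Fin d))
    (hconv : ∀ ω, ConvexOn ℝ Set.univ (f ω))
    (hgrad : ∀ ω x, HasGradientAt (f ω) (gradf ω x) x)
    (hlip : ∀ ω, ∀ u v : EuclideanSpace ℝ (Fin d), ‖gradf ω u - gradf ω v‖ ≤ L * ‖u - v‖)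
    (F : EuclideanSpace ℝ (Fin d) → ℝ)
    (hF : ∀ x, F x = ∫ ω, f ω x ∂μ)
    (gradF : EuclideanSpace ℝ (Fin d) → EuclideanSpace ℝ (Fin d))
    (hgradF : ∀ x, gradF x = ∫ ω, gradf ω x ∂μ)
    (hfint : ∀ x, Integrable (fun ω => f ω x) μ)
    (hgradint : ∀ x, Integrable (fun ω => gradf ω x) μ)
    (wstar : EuclideanSpace ℝ (Fin d))
    (hmin : ∀ u, F wstar ≤ F u)
    (x : EuclideanSpace ℝ (Fin d))
    (hint : Integrable (fun ω => ‖gradf ω x - gradf ω wstar‖ ^ 2) μ) :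
    (∫ ω, ‖gradf ω x - gradf ω wstar‖ ^ 2 ∂μ) ≤ 2 * L * (F x - F wstar) := by
  rcases hL.eq_or_lt with rfl | hL
  · have : ∀ ω, gradf ω x - gradf ω wstar = 0 := fun ω => by
      simpa using hlip ω x wstar
    simp [this]
  have hinner : ∀ v, Integrable (fun ω => inner ℝ (gradf ω wstar) v) μ :=
    fun v => (hgradint wstar).inner_const v
  have hinner_eq : ∀ v, ∫ ω, inner ℝ (gradf ω wstar) v ∂μ = inner ℝ (gradF wstar) v := by
    intro v
    rw [hgradF, real_inner_comm, ← integral_inner (hgradint wstar)]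
    simp only [real_inner_comm]
  have hdesc : ∀ v, F (wstar + v) ≤ F wstar + inner ℝ (gradF wstar) v + L / 2 * ‖v‖ ^ 2 := by
    intro v
    have h := integral_mono (hfint (wstar + v))
      (((hfint wstar).add (hinner v)).add (integrable_const (L / 2 * ‖v‖ ^ 2)))
      (fun ω => aux_descent L (f ω) (gradf ω) (hgrad ω) (hlip ω) wstar v)
    rw [integral_add' ((hfint wstar).add (hinner v)) (integrable_const _),
      integral_add' (hfint wstar) (hinner v), hinner_eq, ← hF, ← hF] at h
    simpa using h
  have hzero : gradF wstar = 0 := by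
    have h1 := hdesc (-(L⁻¹ • gradF wstar))
    have h2 := hmin (wstar + -(L⁻¹ • gradF wstar))
    rw [inner_neg_right, inner_smul_right, real_inner_self_eq_norm_sq, norm_neg, norm_smul,
      Real.norm_of_nonneg (inv_nonneg.2 hL.le)] at h1
    have h4 : L / 2 * (L⁻¹ * ‖gradF wstar‖) ^ 2 = L⁻¹ * ‖gradF wstar‖ ^ 2 / 2 := by
      field_simp
    rw [h4] at h1
    have h5 : L⁻¹ * ‖gradF wstar‖ ^ 2 ≤ 0 := by linarith
    rw [inv_mul_le_iff₀ hL, mul_zero] at h5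
    have h6 : ‖gradF wstar‖ = 0 := by
      have := le_antisymm h5 (sq_nonneg _)
      simpa using this
    exact norm_eq_zero.1 h6
  have hI1 := (hfint x).sub (hfint wstar)
  have h := integral_mono hint ((hI1.sub (hinner (x - wstar))).const_mul (2 * L))
    (fun ω => aux_coco L hL (f ω) (gradf ω) (hconv ω) (hgrad ω) (hlip ω) x wstar)
  rw [integral_const_mul, integral_sub' hI1 (hinner _), integral_sub' (hfint x) (hfint wstar),
    hinner_eq, hzero, inner_zero_left, sub_zero, ← hF, ← hF] at h
  exact h
end

section
/- If a, b, c, d and x are non-negative real numbers such that x ≤ a√(bx + c) + d, then x ≤ 4a²b + 2a√c + 2d. -/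
/-- If `a, b, c, d` and `x` are non-negative real numbers such that
`x ≤ a * √(b * x + c) + d`, then `x ≤ 4 * a² * b + 2 * a * √c + 2 * d`. -/
theorem xlesqrt (a b c d x : ℝ)
    (ha : 0 ≤ a) (hb : 0 ≤ b) (hc : 0 ≤ c) (hd : 0 ≤ d) (hx : 0 ≤ x)
    (h : x ≤ a * Real.sqrt (b * x + c) + d) :
    x ≤ 4 * a ^ 2 * b + 2 * a * Real.sqrt c + 2 * d := by
  have h1 : Real.sqrt (b * x + c) ≤ Real.sqrt b * Real.sqrt x + Real.sqrt c := by
    apply Real.sqrt_le_iff.mpr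
    constructor
    · positivity
    · have e1 := Real.sq_sqrt hb
      have e2 := Real.sq_sqrt hx
      have e3 := Real.sq_sqrt hc
      have e4 : 0 ≤ Real.sqrt b * Real.sqrt x * Real.sqrt c := by positivity
      have e5 : (Real.sqrt b * Real.sqrt x + Real.sqrt c) ^ 2 = Real.sqrt b ^ 2 * Real.sqrt x ^ 2
          + 2 * (Real.sqrt b * Real.sqrt x * Real.sqrt c) + Real.sqrt c ^ 2 := by ring
      rw [e5, e1, e2, e3]
      linarith
  have h2 := mul_le_mul_of_nonneg_left h1 ha
  have h3 := sq_nonneg (a * Real.sqrt b - Real.sqrt x)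
  have h4 : (a * Real.sqrt b - Real.sqrt x) ^ 2 = a ^ 2 * Real.sqrt b ^ 2
      - 2 * (a * (Real.sqrt b * Real.sqrt x)) + Real.sqrt x ^ 2 := by ring
  rw [h4, Real.sq_sqrt hb, Real.sq_sqrt hx] at h3
  have h5 : 0 ≤ a ^ 2 * b := by positivity
  linarith
end

section
/- If a, b, c, d, e, f and x are non-negative real numbers such that x ≤ a√(b√(cx + d) + e) + f, then x ≤ 2^{7/3} a^{4/3} b^{2/3} c^{1/3} + 2a√(2b√(2d) + 2e) + 2f. -/
/-- If `a, b, c, d, e, f` and `x` are non-negative real numbers such that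
`x ≤ a * √(b * √(c * x + d) + e) + f`, then
`x ≤ 2^(7/3) * a^(4/3) * b^(2/3) * c^(1/3) + 2 * a * √(2 * b * √(2 * d) + 2 * e) + 2 * f`. -/
theorem xlefourthrt (a b c d e f x : ℝ)
    (ha : 0 ≤ a) (hb : 0 ≤ b) (hc : 0 ≤ c) (hd : 0 ≤ d) (he : 0 ≤ e) (hf : 0 ≤ f)
    (hx : 0 ≤ x)
    (h : x ≤ a * Real.sqrt (b * Real.sqrt (c * x + d) + e) + f) :
    x ≤ (2 : ℝ) ^ ((7 : ℝ) / 3) * a ^ ((4 : ℝ) / 3) * b ^ ((2 : ℝ) / 3) * c ^ ((1 : ℝ) / 3)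
        + 2 * a * Real.sqrt (2 * b * Real.sqrt (2 * d) + 2 * e) + 2 * f := by
  have r3 : ∀ (y : ℝ) (n : ℕ), 0 ≤ y → (y ^ ((n : ℝ) / 3)) ^ 3 = y ^ n := by
    intro y n hy
    rw [← Real.rpow_natCast, ← Real.rpow_mul hy, ← Real.rpow_natCast]
    congr 1
    push_cast
    ring
  have h2 := r3 2 7 (by norm_num)
  have h4 := r3 a 4 ha
  have hb2 := r3 b 2 hb
  have hc1 := r3 c 1 hc
  push_cast at h2 h4 hb2 hc1
  set T := (2 : ℝ) ^ ((7 : ℝ) / 3) * a ^ ((4 : ℝ) / 3) * b ^ ((2 : ℝ) / 3) * c ^ ((1 : ℝ) / 3)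
    with hT
  have hT0 : 0 ≤ T := by positivity
  have hT3 : T ^ 3 = 128 * a ^ 4 * b ^ 2 * c := by
    rw [hT, mul_pow, mul_pow, mul_pow, h2, h4, hb2, hc1]
    norm_num
  set S := Real.sqrt (2 * b * Real.sqrt (2 * d) + 2 * e) with hS
  have hS0 : 0 ≤ S := Real.sqrt_nonneg _
  have haS : 0 ≤ a * S := mul_nonneg ha hS0
  have hcx : 0 ≤ c * x := mul_nonneg hc hx
  have key : ∀ u, u ≤ 2 * b * Real.sqrt (2 * d) + 2 * e → x ≤ a * Real.sqrt u + f →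
      x ≤ T + 2 * a * S + 2 * f := by
    intro u hu hxu
    have : a * Real.sqrt u ≤ a * S := mul_le_mul_of_nonneg_left (Real.sqrt_le_sqrt hu) ha
    linarith
  have hbd : 0 ≤ b * Real.sqrt (2 * d) := by positivity
  rcases le_total (c * x) d with h1 | h1
  · refine key _ ?_ h
    have : b * Real.sqrt (c * x + d) ≤ b * Real.sqrt (2 * d) :=
      mul_le_mul_of_nonneg_left (Real.sqrt_le_sqrt (by linarith)) hb
    linarith
  have hs : b * Real.sqrt (c * x + d) ≤ b * Real.sqrt (2 * (c * x)) :=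
    mul_le_mul_of_nonneg_left (Real.sqrt_le_sqrt (by linarith)) hb
  rcases le_total (b * Real.sqrt (2 * (c * x))) e with h5 | h5
  · exact key _ (by linarith) h
  set q := Real.sqrt (2 * (c * x)) with hq
  have hq0 : 0 ≤ q := Real.sqrt_nonneg _
  have hq2 : q ^ 2 = 2 * (c * x) := Real.sq_sqrt (by positivity)
  have h6 : a * Real.sqrt (b * Real.sqrt (c * x + d) + e) ≤ a * Real.sqrt (2 * b * q) :=
    mul_le_mul_of_nonneg_left (Real.sqrt_le_sqrt (by linarith)) ha
  set p := Real.sqrt (2 * b * q) with hp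
  have hp0 : 0 ≤ p := Real.sqrt_nonneg _
  have hp2 : p ^ 2 = 2 * b * q := Real.sq_sqrt (by positivity)
  rcases le_total (a * p) f with h7 | h7
  · linarith
  have h8 : x ≤ 2 * (a * p) := by linarith
  have h9 : x ^ 4 ≤ T ^ 3 * x := by
    calc x ^ 4 ≤ (2 * (a * p)) ^ 4 := pow_le_pow_left₀ hx h8 4
      _ = 16 * a ^ 4 * (p ^ 2) ^ 2 := by ring
      _ = 64 * a ^ 4 * b ^ 2 * q ^ 2 := by rw [hp2]; ring
      _ = T ^ 3 * x := by rw [hq2, hT3]; ring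
  have h10 : x ≤ T := by
    rcases hx.eq_or_lt with h0 | h0
    · rw [← h0]; exact hT0
    · have : x ^ 3 ≤ T ^ 3 := le_of_mul_le_mul_right (by linarith [pow_succ x 3]) h0
      exact le_of_pow_le_pow_left₀ (by norm_num) hT0 this
  linarith
end
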